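/- Assume that G is connected, that V* is nonempty, and that for each vertex v ∈ V the neighbors of v are pairwise inequivalent with respect to v (i.e. no two distinct neighbors u, w of v satisfy V''_{vu}(·) = V''_{vw}(· + δ) for some δ ∈ ℝ). Then the network is controllable, i.e. ∂_{q_v} ∈ 𝓜 and ∂_{p_v} ∈ 𝓜 for every v ∈ V. -/

import Mathlib

/-!
Controllability spreads from a vertex `v` to its neighbours, and connectedness does the rest.

If `∂_{p_v} ∈ 𝓜`, then `[∂_{p_v}, X₀] = ∂_{q_v} - γ_v ∂_{p_v}` gives `∂_{q_v} ∈ 𝓜`, and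
`[∂_{q_v}, X₀]` gives, up to a smooth multiple of `∂_{p_v}`, the field
`∑_w V''_{vw}(q_v - q_w) ∂_{p_w}` over the neighbours `w` of `v`. Terms with `∂_{p_w} ∈ 𝓜` may be
dropped. Consider the linear space `S` of families of polynomials `(g_w)`, with `g_v = 0`, such that
`∑_w g_w(q_v - q_w) ∂_{p_w} ∈ 𝓜` (`polyField`). Bracketing with `∂_{q_v}` shows that `S` is
closed under `g ↦ g'`, and the double bracket `[[g, X₀], h] = -(g h)'` (`lieB_lieB_polyField`)
that it is closed under `(g, h) ↦ (g h)'`.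

The rest is algebra (`DerivClosed.exists_single_mem`): for `f ∈ S` with nonconstant, pairwise
inequivalent components on a nonempty set of neighbours and zero elsewhere, `S` contains the
constant family equal to `1` at one of these neighbours and `0` elsewhere. Let `d` be the maximal
degree. The constants `c = f^(d)` satisfy `c^n ∈ S` for `n ≥ 1`, so interpolation yields the
indicator of the set `A` of components sharing one maximal degree and leading coefficient. If
`d = 1`, the members of `A` are translates of each other, so `A` is a singleton. If `d ≥ 2`, then
`f^(d-1)` is on `A` proportional to a centred variable `y_w = x_w + b_w`, and `y` restricted to `A`
lies in `S`. The Euler operator `g ↦ y g'` then acts on the members of `S` supported in `A`, and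
its spectral decomposition extracts the Taylor coefficients of `f_w` at `y_w = 0`. The constants
supported in `A` form an algebra, and since inequivalent polynomials differ in some Taylor
coefficient, this algebra separates the points of `A` and contains the indicator of each of them.

Applied to the neighbours with `∂_{p_w} ∉ 𝓜`, this shows that there are none (`MM.dp_of_adj`).
-/

open scoped Classical
open Polynomial

noncomputable section

/-- Phase space ℝ^{2|V|}: positions `q = x.1` and momenta `p = x.2`. -/
abbrev Phase (V : Type) := (V → ℝ) × (V → ℝ)

/-- Lie bracket of vector fields: `[Y,Z](x) = DZ(x)·Y(x) − DY(x)·Z(x)`. -/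
def lieB {V : Type} [Fintype V] (Y Z : Phase V → Phase V) : Phase V → Phase V :=
  fun x => fderiv ℝ Z x (Y x) - fderiv ℝ Y x (Z x)

/-- The constant vector field `∂_{p_v}`. -/
def dp {V : Type} [Fintype V] [DecidableEq V] (v : V) : Phase V → Phase V :=
  fun _ => (0, Pi.single v 1)

/-- The constant vector field `∂_{q_v}`. -/
def dq {V : Type} [Fintype V] [DecidableEq V] (v : V) : Phase V → Phase V :=
  fun _ => (Pi.single v 1, 0)

/-- The constant vector field `∑_{v ∈ A} ∂_{p_v}`. -/
def dpSum {V : Type} [Fintype V] [DecidableEq V] (A : Finset V) : Phase V → Phase V :=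
  fun _ => (0, ∑ v ∈ A, Pi.single v 1)

/-- The constant vector field `∑_{v ∈ A} ∂_{q_v}`. -/
def dqSum {V : Type} [Fintype V] [DecidableEq V] (A : Finset V) : Phase V → Phase V :=
  fun _ => (∑ v ∈ A, Pi.single v 1, 0)

/-- The drift vector field
`X₀ = −∑_{v∈V*} γ_v p_v ∂_{p_v} + ∑_{v∈V} (p_v ∂_{q_v} − U_v'(q_v) ∂_{p_v})
      − ∑_{{u,v}∈E} V_{uv}'(q_u − q_v)(∂_{p_u} − ∂_{p_v})`,
written componentwise (using the symmetry `V_{vu}(x) = V_{uv}(−x)` of the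
interaction potentials, the `∂_{p_v}`-component of the edge term at a vertex `v` is
`−∑_{w ~ v} V_{vw}'(q_v − q_w)`). -/
def X0 {V : Type} [Fintype V] [DecidableEq V] (G : SimpleGraph V) [DecidableRel G.Adj]
    (γ : V → ℝ) (U : V → ℝ → ℝ) (Vp : V → V → Polynomial ℝ) : Phase V → Phase V :=
  fun x =>
    (x.2, fun v =>
      -(γ v) * x.2 v - deriv (U v) (x.1 v) -
        ∑ w ∈ Finset.univ.filter (fun w => G.Adj v w),
          (derivative (Vp v w)).eval (x.1 v - x.1 w))

/-- The smallest collection `𝓜` of vector fields on `ℝ^{2|V|}` that contains `∂_{p_v}`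
for every `v ∈ V*`, and is closed under linear combinations, Lie brackets,
bracketing with `X₀`, and multiplication by smooth scalar functions. -/
inductive MM {V : Type} [Fintype V] [DecidableEq V] (Vstar : Finset V)
    (X₀ : Phase V → Phase V) : (Phase V → Phase V) → Prop
  | basic (v : V) (hv : v ∈ Vstar) : MM Vstar X₀ (dp v)
  | add {Y Z : Phase V → Phase V} : MM Vstar X₀ Y → MM Vstar X₀ Z → MM Vstar X₀ (Y + Z)
  | smul (a : ℝ) {Y : Phase V → Phase V} : MM Vstar X₀ Y → MM Vstar X₀ (a • Y)
  | lie {Y Z : Phase V → Phase V} : MM Vstar X₀ Y → MM Vstar X₀ Z → MM Vstar X₀ (lieB Y Z)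
  | lieX {Y : Phase V → Phase V} : MM Vstar X₀ Y → MM Vstar X₀ (lieB Y X₀)
  | mulS (f : Phase V → ℝ) (hf : ContDiff ℝ (⊤ : ℕ∞) f) {Y : Phase V → Phase V} :
      MM Vstar X₀ Y → MM Vstar X₀ (fun x => f x • Y x)

/-- A vertex `v` is controllable if `∂_{q_v} ∈ 𝓜` and `∂_{p_v} ∈ 𝓜`. -/
def Controllable {V : Type} [Fintype V] [DecidableEq V] (Vstar : Finset V)
    (X₀ : Phase V → Phase V) (v : V) : Prop :=
  MM Vstar X₀ (dq v) ∧ MM Vstar X₀ (dp v)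

/-- Two polynomials are equivalent if `f(·) = g(· + δ)` for some `δ ∈ ℝ`. -/
def PolyEquiv (f g : Polynomial ℝ) : Prop :=
  ∃ δ : ℝ, ∀ x : ℝ, f.eval x = g.eval (x + δ)

/-! ### Families of polynomials in one variable -/

/-- A real linear space `S` of families of polynomials that is closed under differentiation,
`g ↦ g'`, and under the product `(g, h) ↦ (g h)'`, both taken componentwise. -/
structure DerivClosed {ι : Type} (S : Submodule ℝ (ι → ℝ[X])) : Prop where
  deriv_mem : ∀ g ∈ S, (fun i => derivative (g i)) ∈ S
  mul_mem : ∀ g ∈ S, ∀ h ∈ S, (fun i => derivative (g i * h i)) ∈ S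

namespace DerivClosed

variable {ι : Type} {S : Submodule ℝ (ι → ℝ[X])}

lemma iterate_mem (hS : DerivClosed S) {f : ι → ℝ[X]} (hf : f ∈ S) (k : ℕ) :
    (fun i => derivative^[k] (f i)) ∈ S := by
  induction k with
  | zero => simpa using hf
  | succ k ih =>
    simp only [Function.iterate_succ_apply']
    exact hS.deriv_mem _ ih

lemma const_mul_deriv_mem (hS : DerivClosed S) {e : ι → ℝ} (he : (fun i => C (e i)) ∈ S)
    {g : ι → ℝ[X]} (hg : g ∈ S) : (fun i => C (e i) * derivative (g i)) ∈ S := by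
  simpa only [derivative_C_mul] using hS.mul_mem _ he _ hg

/-- If `g ∈ S` has constant derivative `c`, then `S` contains the constant families `c^(n+1)`,
hence all polynomials in `c` without constant term; interpolation produces the indicator of a
level set of `c` at a nonzero level. -/
lemma indicator_mem [Fintype ι] (hS : DerivClosed S) {g : ι → ℝ[X]} (hg : g ∈ S) {c : ι → ℝ}
    (hc : ∀ i, derivative (g i) = C (c i)) {a : ℝ} (ha : a ≠ 0) :
    (fun i => C (if c i = a then (1 : ℝ) else 0)) ∈ S := by
  have hc1 : (fun i => C (c i)) ∈ S := by
    simpa only [hc] using hS.deriv_mem _ hg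
  have hpow : ∀ n : ℕ, (fun i => C (c i ^ (n + 1))) ∈ S := by
    intro n
    induction n with
    | zero => simpa using hc1
    | succ n ih =>
      have := hS.const_mul_deriv_mem ih hg
      simp only [hc, ← C_mul] at this
      simpa only [pow_succ] using this
  have hq : ∀ q : ℝ[X], (fun i => C (c i * q.eval (c i))) ∈ S := by
    intro q
    induction q using Polynomial.induction_on' with
    | add p q hp hq =>
      convert S.add_mem hp hq using 1
      funext i
      simp [mul_add]
    | monomial n r =>
      convert S.smul_mem r (hpow n) using 1
      funext i
      simp only [eval_monomial, Pi.smul_apply, smul_C, smul_eq_mul]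
      congr 1
      ring
  set s : Finset ℝ := insert 0 (Finset.univ.image c)
  set p : ℝ[X] := Lagrange.interpolate s id (fun t => if t = a then (1 : ℝ) else 0) with hp
  have hev : ∀ t ∈ s, p.eval t = if t = a then (1 : ℝ) else 0 := fun t ht =>
    Lagrange.eval_interpolate_at_node (v := id) _ (Function.injective_id.injOn) ht
  have hX : X ∣ p := by
    rw [X_dvd_iff, coeff_zero_eq_eval_zero, hev 0 (by simp [s]), if_neg ha.symm]
  obtain ⟨q, hpq⟩ := hX
  convert hq q using 1
  funext i
  rw [← hev (c i) (by simp [s]), hpq]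
  simp

/-- Let `A` be a set of indices and `y i = X + b i`. If the family `y` restricted to `A` lies in
`S`, then `S` is stable, on families supported in `A`, under the Euler operator `g ↦ y g'`, whose
eigenvectors are the powers of `y`. Removing the nonconstant powers one degree at a time leaves
the value of `g` at `y = 0`. -/
lemma eval_mem (hS : DerivClosed S) {A : Set ι} {b : ι → ℝ}
    (hY : (fun i => if i ∈ A then X + C (b i) else 0) ∈ S) (n : ℕ) :
    ∀ g ∈ S, (∀ i ∉ A, g i = 0) → (∀ i, (g i).natDegree ≤ n) →
      (fun i => C ((g i).eval (-b i))) ∈ S := by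
  induction n with
  | zero =>
    intro g hg _ hdeg
    convert hg using 1
    funext i
    rw [eq_C_of_natDegree_le_zero (hdeg i)]
    simp
  | succ n ih =>
    intro g hg hA hdeg
    -- `g₂ = y g' - (n+1) g`: the coefficient of `y^(n+1)` cancels.
    have hg₂ : (fun i => (X + C (b i)) * derivative (g i) - C ((n : ℝ) + 1) * g i) ∈ S := by
      convert S.sub_mem (hS.mul_mem _ hY _ hg) (S.smul_mem ((n : ℝ) + 2) hg) using 1
      funext i
      by_cases hi : i ∈ A
      · simp only [Pi.sub_apply, Pi.smul_apply, hi, if_true, derivative_mul, derivative_add,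
          derivative_X, derivative_C, smul_eq_C_mul, C_add, C_1, map_ofNat]
        ring
      · simp [hi, hA i hi]
    have hmem := ih _ hg₂ (fun i hi => by simp [hA i hi]) (fun i => by
      rw [natDegree_le_iff_coeff_eq_zero]
      intro N hN
      obtain ⟨M, rfl⟩ : ∃ M, N = M + 1 := ⟨N - 1, by omega⟩
      have h2 : (g i).coeff (M + 1 + 1) = 0 :=
        coeff_eq_zero_of_natDegree_lt (by have := hdeg i; omega)
      rw [coeff_sub, add_mul, coeff_add, coeff_X_mul, coeff_C_mul, coeff_C_mul,
        coeff_derivative, coeff_derivative, h2]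
      rcases Nat.lt_or_ge n M with h | h
      · rw [coeff_eq_zero_of_natDegree_lt (by have := hdeg i; omega)]
        simp
      · obtain rfl : M = n := by omega
        ring)
    have hne : (n : ℝ) + 1 ≠ 0 := by positivity
    convert S.smul_mem (-((n : ℝ) + 1)⁻¹) hmem using 1
    funext i
    simp only [eval_sub, eval_mul, eval_add, eval_X, eval_C, Pi.smul_apply, smul_C, smul_eq_mul]
    congr 1
    field_simp
    ring

/-- Two polynomials all of whose derivatives agree, at `r` and `s` respectively, are translates of
each other. -/
lemma eq_taylor_of_iterate {p q : ℝ[X]} {r s : ℝ}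
    (h : ∀ k, (derivative^[k] p).eval r = (derivative^[k] q).eval s) :
    p = taylor (s - r) q := by
  have h1 : taylor r p = taylor s q := by
    ext k
    have hk := h k
    simp only [← factorial_smul_hasseDeriv, LinearMap.smul_apply, eval_smul] at hk
    rw [taylor_coeff, taylor_coeff]
    have : (k.factorial : ℝ) ≠ 0 := by positivity
    simpa [this] using hk
  have h2 := congrArg (taylor (-r)) h1
  rw [taylor_taylor, taylor_taylor] at h2
  simpa [sub_eq_neg_add] using h2

/-- The algebraic core: if `f ∈ S` has no nonzero constant component and no two of its nonzero
components are translates of each other, then `S` contains the constant unit family at some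
index `i` with `f i ≠ 0`. -/
theorem exists_single_mem [Fintype ι] (hS : DerivClosed S) {f : ι → ℝ[X]} (hf : f ∈ S)
    (hne : ∃ i, f i ≠ 0) (hdeg : ∀ i, f i ≠ 0 → 1 ≤ (f i).natDegree)
    (hineq : ∀ i j, f i ≠ 0 → f j ≠ 0 → i ≠ j → ∀ δ, f i ≠ taylor δ (f j)) :
    ∃ i, f i ≠ 0 ∧ (Pi.single i 1 : ι → ℝ[X]) ∈ S := by
  obtain ⟨j, hj⟩ := hne
  obtain ⟨i₀, -, hmax⟩ := Finset.exists_max_image Finset.univ (fun i => (f i).natDegree)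
    ⟨j, Finset.mem_univ j⟩
  obtain ⟨m, hm⟩ : ∃ m, (f i₀).natDegree = m + 1 :=
    ⟨(f i₀).natDegree - 1, by have := hdeg j hj; have := hmax j (Finset.mem_univ j); omega⟩
  have hle : ∀ i, (f i).natDegree ≤ m + 1 := fun i => hm ▸ hmax i (Finset.mem_univ i)
  have hlin : ∀ i, ∃ a b, derivative^[m] (f i) = C a * X + C b := fun i =>
    exists_eq_X_add_C_of_natDegree_le_one
      ((natDegree_iterate_derivative _ _).trans (by have := hle i; omega))
  choose c β hcβ using hlin
  have hc : ∀ i, derivative (derivative^[m] (f i)) = C (c i) := fun i => by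
    rw [hcβ]
    simp
  have hcoeff : ∀ i, c i = (m + 1).descFactorial m • (f i).coeff (m + 1) := fun i => by
    rw [← add_comm 1 m, ← coeff_iterate_derivative, hcβ]
    simp
  set a := c i₀ with ha_def
  have ha : a ≠ 0 := by
    have h1 : (f i₀).coeff (m + 1) ≠ 0 := by
      rw [← hm, coeff_natDegree, Ne, leadingCoeff_eq_zero]
      rintro h
      simp [h] at hm
    rw [ha_def, hcoeff, nsmul_eq_mul]
    exact mul_ne_zero (by exact_mod_cast (Nat.descFactorial_pos.2 (by omega)).ne') h1
  have hf0 : ∀ i, c i = a → f i ≠ 0 := by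
    intro i hi h
    apply ha
    rw [← hi, hcoeff, h]
    simp
  -- `A` consists of the components with the same degree and leading coefficient as `f i₀`.
  set A : Set ι := {i | c i = a} with hA
  set b : ι → ℝ := fun i => β i / a with hb
  have hy : ∀ i ∈ A, derivative^[m] (f i) = C a * (X + C (b i)) := by
    intro i hi
    have hi' : c i = a := hi
    rw [hcβ, hi', mul_add, ← C_mul]
    congr 2
    simp only [hb]
    field_simp
  have hχ : (fun i => C (if i ∈ A then (1 : ℝ) else 0)) ∈ S :=
    hS.indicator_mem (hS.iterate_mem hf m) hc ha
  refine ⟨i₀, hf0 i₀ rfl, ?_⟩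
  suffices h : ∃ e : ι → ℝ, (fun i => C (e i)) ∈ S ∧ e i₀ = 1 ∧ ∀ i, i ≠ i₀ → e i = 0 by
    obtain ⟨e, he, h1, h0⟩ := h
    convert he using 1
    funext i
    by_cases hi : i = i₀
    · subst hi
      simp [h1]
    · simp [hi, h0 i hi]
  rcases m with _ | m
  · -- Degree one: two components in `A` would be translates of each other.
    refine ⟨_, hχ, by simp [hA, ha_def], fun i hi => if_neg fun hiA => ?_⟩
    apply hineq i i₀ (hf0 i hiA) (hf0 i₀ rfl) hi (b i - b i₀)
    have h1 := hy i hiA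
    have h2 := hy i₀ rfl
    simp only [Function.iterate_zero, id] at h1 h2
    rw [h1, h2, taylor_apply]
    simp only [mul_comp, add_comp, C_comp, X_comp, C_sub]
    ring
  -- A constant family supported in `A` may be multiplied by `y = X + b`.
  have hmuly : ∀ e : ι → ℝ, (fun i => C (e i)) ∈ S → (∀ i ∉ A, e i = 0) →
      (fun i => C (e i) * (X + C (b i))) ∈ S := by
    intro e he hA'
    convert S.smul_mem a⁻¹ (hS.const_mul_deriv_mem he (hS.iterate_mem hf m)) using 1
    funext i
    simp only [Pi.smul_apply, ← Function.iterate_succ_apply' (f := derivative)]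
    by_cases hi : i ∈ A
    · rw [hy i hi, smul_eq_C_mul, mul_left_comm (C (e i)), ← mul_assoc (C a⁻¹), ← C_mul,
        inv_mul_cancel₀ ha, C_1, one_mul]
    · simp [hA' i hi]
  have hY : (fun i => if i ∈ A then X + C (b i) else 0) ∈ S := by
    convert hmuly _ hχ (fun i hi => if_neg hi) using 1
    funext i
    split_ifs <;> simp
  have hprod : ∀ e e' : ι → ℝ, (fun i => C (e i)) ∈ S → (fun i => C (e' i)) ∈ S →
      (∀ i ∉ A, e' i = 0) → (fun i => C (e i * e' i)) ∈ S := by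
    intro e e' he he' hA'
    convert hS.mul_mem _ he _ (hmuly e' he' hA') using 1
    funext i
    simp
  -- Values at `y = 0` of all derivatives of the components in `A`.
  have hval : ∀ k, (fun i => C (if i ∈ A then (derivative^[k] (f i)).eval (-b i) else 0)) ∈ S := by
    intro k
    have h1 := hS.mul_mem _ hY _ (hS.iterate_mem hf k)
    obtain ⟨N, hN⟩ : ∃ N, ∀ i, (derivative ((if i ∈ A then X + C (b i) else 0) *
        derivative^[k] (f i))).natDegree ≤ N :=
      ⟨_, fun i => Finset.le_sup (f := fun i => (derivative ((if i ∈ A then X + C (b i) else 0) *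
        derivative^[k] (f i))).natDegree) (Finset.mem_univ i)⟩
    convert hS.eval_mem hY N _ h1 (fun i hi => by simp [hi]) hN using 1
    funext i
    split_ifs <;> simp
  -- These values separate the points of `A`, so products of them isolate `i₀`.
  have hsep : ∀ B : Finset ι, i₀ ∉ B → ∃ e : ι → ℝ, (fun i => C (e i)) ∈ S ∧ e i₀ = 1 ∧
      (∀ i ∉ A, e i = 0) ∧ ∀ i ∈ B, e i = 0 := by
    intro B
    induction B using Finset.induction_on with
    | empty => exact fun _ => ⟨_, hχ, by simp [hA, ha_def], fun i hi => if_neg hi, by simp⟩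
    | insert u B _ ih =>
      intro hB
      rw [Finset.mem_insert, not_or] at hB
      obtain ⟨e, he, he1, heA, heB⟩ := ih hB.2
      by_cases hu : u ∈ A
      · obtain ⟨k, hk⟩ : ∃ k, (derivative^[k] (f i₀)).eval (-b i₀) ≠
            (derivative^[k] (f u)).eval (-b u) := by
          by_contra! h
          exact hineq i₀ u (hf0 i₀ rfl) (hf0 u hu) hB.1 _ (eq_taylor_of_iterate h)
        set t := (derivative^[k] (f u)).eval (-b u)
        set t₀ := (derivative^[k] (f i₀)).eval (-b i₀)
        have h1 := hprod _ e (S.smul_mem (t₀ - t)⁻¹ (S.sub_mem (hval k) (S.smul_mem t hχ))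
          |> fun h => (by
            convert h using 1
            funext i
            simp only [Pi.smul_apply, Pi.sub_apply, smul_C, ← C_sub] :
            (fun i => C ((t₀ - t)⁻¹ • ((if i ∈ A then (derivative^[k] (f i)).eval (-b i) else 0) -
              t • (if i ∈ A then (1 : ℝ) else 0)))) ∈ S)) he heA
        refine ⟨_, h1, ?_, fun i hi => by simp [heA i hi], fun i hi => ?_⟩
        · have : i₀ ∈ A := rfl
          simp only [this, if_true, he1, smul_eq_mul, mul_one]
          exact inv_mul_cancel₀ (sub_ne_zero.2 hk)
        · rcases Finset.mem_insert.1 hi with rfl | hi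
          · simp [hu, t]
          · simp [heB i hi]
      · refine ⟨e, he, he1, heA, fun i hi => ?_⟩
        rcases Finset.mem_insert.1 hi with rfl | hi
        · exact heA _ hu
        · exact heB i hi
  obtain ⟨e, he, h1, -, h0⟩ := hsep (Finset.univ.erase i₀) (by simp)
  exact ⟨e, he, h1, fun i hi => h0 i (by simp [hi])⟩

end DerivClosed

/-! ### Vector fields on phase space -/

section Geometry

variable {V : Type}

/-- The vector field `∑_w g_w(q_v - q_w) ∂_{p_w}` attached to a family of polynomials `g`. -/
def polyField (v : V) (g : V → ℝ[X]) : Phase V → Phase V :=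
  fun x => (0, fun w => (g w).eval (x.1 v - x.1 w))


lemma hasFDerivAt_q (x : Phase V) (w : V) : HasFDerivAt (fun x : Phase V => x.1 w)
    ((ContinuousLinearMap.proj w).comp (ContinuousLinearMap.fst ℝ (V → ℝ) (V → ℝ))) x :=
  ((ContinuousLinearMap.proj w).comp (ContinuousLinearMap.fst ℝ (V → ℝ) (V → ℝ))).hasFDerivAt

lemma hasFDerivAt_p (x : Phase V) (w : V) : HasFDerivAt (fun x : Phase V => x.2 w)
    ((ContinuousLinearMap.proj w).comp (ContinuousLinearMap.snd ℝ (V → ℝ) (V → ℝ))) x :=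
  ((ContinuousLinearMap.proj w).comp (ContinuousLinearMap.snd ℝ (V → ℝ) (V → ℝ))).hasFDerivAt

variable [Fintype V]

lemma hasFDerivAt_eval (p : ℝ[X]) (x : Phase V) (v w : V) :
    HasFDerivAt (fun x : Phase V => p.eval (x.1 v - x.1 w))
      ((derivative p).eval (x.1 v - x.1 w) •
        ((ContinuousLinearMap.proj v).comp (ContinuousLinearMap.fst ℝ (V → ℝ) (V → ℝ)) -
          (ContinuousLinearMap.proj w).comp (ContinuousLinearMap.fst ℝ (V → ℝ) (V → ℝ)))) x :=
  HasDerivAt.comp_hasFDerivAt (h₂ := fun t => p.eval t) x (p.hasDerivAt (x.1 v - x.1 w))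
    ((hasFDerivAt_q x v).fun_sub (hasFDerivAt_q x w))

lemma fderiv_polyField (v : V) (g : V → ℝ[X]) (x h : Phase V) :
    fderiv ℝ (polyField v g) x h =
      (0, fun w => (derivative (g w)).eval (x.1 v - x.1 w) * (h.1 v - h.1 w)) := by
  have H : HasFDerivAt (polyField v g) _ x :=
    (hasFDerivAt_const (0 : V → ℝ) x).prodMk
      (hasFDerivAt_pi.2 fun w => hasFDerivAt_eval (g w) x v w)
  rw [H.fderiv]
  ext w <;> simp

lemma fderiv_X0 [DecidableEq V] (G : SimpleGraph V) [DecidableRel G.Adj] (γ : V → ℝ) (U : V → ℝ → ℝ)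
    (Vp : V → V → ℝ[X]) (hU : ∀ v, ContDiff ℝ (⊤ : ℕ∞) (U v)) (x h : Phase V) :
    fderiv ℝ (X0 G γ U Vp) x h =
      (h.2, fun v => -(γ v) * h.2 v - deriv (deriv (U v)) (x.1 v) * h.1 v -
        ∑ w ∈ Finset.univ.filter (fun w => G.Adj v w),
          (derivative (derivative (Vp v w))).eval (x.1 v - x.1 w) * (h.1 v - h.1 w)) := by
  have hU' : ∀ v t, HasDerivAt (deriv (U v)) (deriv (deriv (U v)) t) t := fun v t =>
    (((contDiff_infty_iff_deriv.1 (hU v)).2.differentiable (by simp)) t).hasDerivAt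
  have H : HasFDerivAt (X0 G γ U Vp) _ x :=
    (ContinuousLinearMap.snd ℝ (V → ℝ) (V → ℝ)).hasFDerivAt.prodMk
      (hasFDerivAt_pi.2 fun v =>
        (((hasFDerivAt_p x v).const_mul (-(γ v))).sub
          ((hU' v (x.1 v)).comp_hasFDerivAt x (hasFDerivAt_q x v))).sub
          (HasFDerivAt.fun_sum (u := Finset.univ.filter (fun w => G.Adj v w)) fun w _ =>
            hasFDerivAt_eval (derivative (Vp v w)) x v w))
  rw [H.fderiv]
  ext w <;> simp

variable [DecidableEq V]

lemma lieB_dq (v : V) (Z : Phase V → Phase V) (x : Phase V) :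
    lieB (dq v) Z x = fderiv ℝ Z x (Pi.single v 1, 0) := by
  unfold lieB dq
  simp

lemma lieB_dp (v : V) (Z : Phase V → Phase V) (x : Phase V) :
    lieB (dp v) Z x = fderiv ℝ Z x (0, Pi.single v 1) := by
  unfold lieB dp
  simp

lemma lieB_dq_polyField (v : V) (g : V → ℝ[X]) (hg : g v = 0) :
    lieB (dq v) (polyField v g) = polyField v fun w => derivative (g w) := by
  funext x
  rw [lieB_dq, fderiv_polyField]
  ext w
  · simp [polyField]
  · by_cases hw : w = v
    · subst hw
      simp [polyField, hg]
    · simp [polyField, hw]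

lemma lieB_polyField_X0 (G : SimpleGraph V) [DecidableRel G.Adj] (γ : V → ℝ) (U : V → ℝ → ℝ)
    (Vp : V → V → ℝ[X]) (hU : ∀ v, ContDiff ℝ (⊤ : ℕ∞) (U v)) (v : V) (g : V → ℝ[X]) :
    lieB (polyField v g) (X0 G γ U Vp) = fun x =>
      (fun w => (g w).eval (x.1 v - x.1 w), fun w => -(γ w) * (g w).eval (x.1 v - x.1 w) -
        (derivative (g w)).eval (x.1 v - x.1 w) * (x.2 v - x.2 w)) := by
  funext x
  rw [lieB, fderiv_X0 G γ U Vp hU, fderiv_polyField]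
  ext w <;> simp [polyField, X0]

/-- The double bracket that induces the product `(g, h) ↦ (g h)'` on families of polynomials. -/
lemma lieB_lieB_polyField (G : SimpleGraph V) [DecidableRel G.Adj] (γ : V → ℝ) (U : V → ℝ → ℝ)
    (Vp : V → V → ℝ[X]) (hU : ∀ v, ContDiff ℝ (⊤ : ℕ∞) (U v)) (v : V) (g h : V → ℝ[X])
    (hg : g v = 0) (hh : h v = 0) :
    lieB (lieB (polyField v g) (X0 G γ U Vp)) (polyField v h) =
      -polyField v fun w => derivative (g w * h w) := by
  rw [lieB_polyField_X0 G γ U Vp hU]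
  funext x
  have H : HasFDerivAt (fun x : Phase V =>
      ((fun w => (g w).eval (x.1 v - x.1 w), fun w => -(γ w) * (g w).eval (x.1 v - x.1 w) -
        (derivative (g w)).eval (x.1 v - x.1 w) * (x.2 v - x.2 w)) : Phase V)) _ x :=
    (hasFDerivAt_pi.2 fun w => hasFDerivAt_eval (g w) x v w).prodMk
      (hasFDerivAt_pi.2 fun w =>
        ((hasFDerivAt_eval (g w) x v w).const_mul (-(γ w))).sub
          ((hasFDerivAt_eval (derivative (g w)) x v w).mul
            ((hasFDerivAt_p x v).sub (hasFDerivAt_p x w))))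
  rw [lieB, H.fderiv, fderiv_polyField]
  ext w
  · simp [polyField]
  · simp [polyField, hg, hh]
    ring

variable {Vstar : Finset V} {X₀ : Phase V → Phase V}

lemma MM.zero (hne : Vstar.Nonempty) : MM Vstar X₀ 0 := by
  obtain ⟨v, hv⟩ := hne
  simpa using MM.smul 0 (MM.basic (X₀ := X₀) v hv)

lemma MM.sum (hne : Vstar.Nonempty) {ι : Type} (s : Finset ι) (Y : ι → Phase V → Phase V)
    (h : ∀ i ∈ s, MM Vstar X₀ (Y i)) : MM Vstar X₀ (∑ i ∈ s, Y i) := by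
  induction s using Finset.induction_on with
  | empty => simpa using MM.zero hne
  | insert a s ha ih =>
    rw [Finset.sum_insert ha]
    exact (h a (by simp)).add (ih fun i hi => h i (by simp [hi]))

/-- Smooth combinations of those `∂_{p_w}` that lie in `𝓜`. -/
lemma MM.combination (hne : Vstar.Nonempty) (φ : V → Phase V → ℝ)
    (hφ : ∀ w, ContDiff ℝ (⊤ : ℕ∞) (φ w)) (h : ∀ w, φ w = 0 ∨ MM Vstar X₀ (dp w)) :
    MM Vstar X₀ (fun x => (0, fun w => φ w x)) := by
  have := MM.sum (X₀ := X₀) hne Finset.univ (fun w x => φ w x • dp w x) fun w _ => by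
    rcases h w with h | h
    · simp only [h, Pi.zero_apply, zero_smul]
      exact MM.zero hne
    · exact h.mulS _ (hφ w)
  convert this using 1
  funext x
  ext w
  · simp [dp, Finset.sum_apply, Prod.fst_sum]
  · simp [dp, Finset.sum_apply, Prod.snd_sum, Pi.single_apply]

lemma MM.dq_of_dp (G : SimpleGraph V) [DecidableRel G.Adj] (γ : V → ℝ) (U : V → ℝ → ℝ)
    (Vp : V → V → ℝ[X]) (hU : ∀ v, ContDiff ℝ (⊤ : ℕ∞) (U v)) {v : V}
    (h : MM Vstar (X0 G γ U Vp) (dp v)) : MM Vstar (X0 G γ U Vp) (dq v) := by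
  convert h.lieX.add (h.smul (γ v)) using 1
  funext x
  rw [Pi.add_apply, lieB_dp, fderiv_X0 G γ U Vp hU]
  ext w
  · simp [dq, dp]
  · by_cases hw : w = v
    · subst hw
      simp [dq, dp]
    · simp [dq, dp, hw]

/-- Controllability passes to all neighbours of a controllable vertex. -/
lemma MM.dp_of_adj (G : SimpleGraph V) [DecidableRel G.Adj] (γ : V → ℝ) (U : V → ℝ → ℝ)
    (Vp : V → V → ℝ[X]) (hU : ∀ v, ContDiff ℝ (⊤ : ℕ∞) (U v))
    (hsym : ∀ u v, G.Adj u v → ∀ x : ℝ, (Vp v u).eval x = (Vp u v).eval (-x))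
    (hdeg : ∀ u v, G.Adj u v → 3 ≤ (Vp u v).natDegree) (hne : Vstar.Nonempty)
    (hineq : ∀ v u w : V, G.Adj v u → G.Adj v w → u ≠ w →
      ¬ PolyEquiv (derivative (derivative (Vp v u))) (derivative (derivative (Vp v w))))
    {v u : V} (hvu : G.Adj v u) (h : MM Vstar (X0 G γ U Vp) (dp v)) :
    MM Vstar (X0 G γ U Vp) (dp u) := by
  by_contra hu
  have hq := h.dq_of_dp G γ U Vp hU
  -- Families of polynomials whose vector field lies in `𝓜`.
  let S : Submodule ℝ (V → ℝ[X]) :=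
    { carrier := {g | g v = 0 ∧ MM Vstar (X0 G γ U Vp) (polyField v g)}
      zero_mem' := ⟨rfl, by
        convert MM.zero hne using 1
        funext x
        ext w <;> simp [polyField]⟩
      add_mem' := fun {g k} hg hk => ⟨by simp [hg.1, hk.1], by
        convert hg.2.add hk.2 using 1
        funext x
        ext w <;> simp [polyField]⟩
      smul_mem' := fun a g hg => ⟨by simp [hg.1], by
        convert hg.2.smul a using 1
        funext x
        ext w <;> simp [polyField]⟩ }
  have hS : DerivClosed S :=
    { deriv_mem := fun g hg => ⟨by simp [hg.1], by
        rw [← lieB_dq_polyField v g hg.1]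
        exact hq.lie hg.2⟩
      mul_mem := fun g hg k hk => ⟨by simp [hg.1], by
        have := (hg.2.lieX.lie hk.2).smul (-1)
        rwa [lieB_lieB_polyField G γ U Vp hU v g k hg.1 hk.1, smul_neg, neg_smul, neg_neg,
          one_smul] at this⟩ }
  -- Only the neighbours not yet known to be controllable are kept.
  let f : V → ℝ[X] := fun w => if G.Adj v w ∧ ¬ MM Vstar (X0 G γ U Vp) (dp w) then
    derivative (derivative (Vp v w)) else 0
  have hfw : ∀ w, f w ≠ 0 → (G.Adj v w ∧ ¬ MM Vstar (X0 G γ U Vp) (dp w)) ∧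
      f w = derivative (derivative (Vp v w)) := fun w hw => by
    by_cases hc : G.Adj v w ∧ ¬ MM Vstar (X0 G γ U Vp) (dp w)
    · exact ⟨hc, if_pos hc⟩
    · exact absurd (if_neg hc) hw
  have hd2 : ∀ w, G.Adj v w → 1 ≤ (derivative (derivative (Vp v w))).natDegree := fun w hw => by
    rw [natDegree_derivative, natDegree_derivative]
    have := hdeg v w hw
    omega
  have hfS : f ∈ S := by
    refine ⟨if_neg fun hc => G.irrefl hc.1, ?_⟩
    -- The bracket `[∂_{q_v}, X₀]`, corrected by smooth multiples of the known `∂_{p_w}`.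
    let κ : V → Phase V → ℝ := fun w x =>
      if w = v then -deriv (deriv (U v)) (x.1 v) -
        ∑ w ∈ Finset.univ.filter (fun w => G.Adj v w),
          (derivative (derivative (Vp v w))).eval (x.1 v - x.1 w)
      else if G.Adj v w then (derivative (derivative (Vp v w))).eval (x.1 v - x.1 w) else 0
    have hκ : lieB (dq v) (X0 G γ U Vp) = fun x => (0, fun w => κ w x) := by
      funext x
      rw [lieB_dq, fderiv_X0 G γ U Vp hU]
      ext w
      · rfl
      · by_cases hw : w = v
        · subst hw
          simp only [κ, if_true, Pi.zero_apply, mul_zero, Pi.single_eq_same, mul_one, zero_sub]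
          congr 1
          refine Finset.sum_congr rfl fun z hz => ?_
          have : z ≠ w := fun hzw => G.irrefl (hzw ▸ (Finset.mem_filter.1 hz).2)
          simp [this]
        · simp only [κ, hw, if_false, Pi.zero_apply, mul_zero, ne_eq, not_false_eq_true,
            Pi.single_eq_of_ne, zero_sub, sub_zero, mul_neg, Finset.sum_neg_distrib,
            neg_neg, Pi.single_apply, mul_ite, mul_one, Finset.sum_ite_eq', Finset.mem_filter,
            Finset.mem_univ, true_and, G.adj_comm w v]
          split_ifs with hadj
          · have hcomp : Vp w v = (Vp v w).comp (-X) :=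
              Polynomial.funext fun t => by simp [hsym v w hadj t]
            rw [hcomp]
            simp [derivative_comp]
          · rfl
    have hsmooth : ∀ (p : ℝ[X]) (w : V),
        ContDiff ℝ (⊤ : ℕ∞) (fun x : Phase V => p.eval (x.1 v - x.1 w)) := fun p w =>
      (by simpa using p.contDiff_aeval (𝕜 := ℝ) (R := ℝ) _ :
        ContDiff ℝ (⊤ : ℕ∞) fun t => p.eval t).comp (by fun_prop)
    have hcorr := MM.combination (X₀ := X0 G γ U Vp) hne
      (fun w x => (f w).eval (x.1 v - x.1 w) - κ w x) (fun w => (hsmooth (f w) w).sub (by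
        by_cases hw : w = v
        · simp only [κ, hw, if_true]
          have hU2 : ContDiff ℝ (⊤ : ℕ∞) (deriv (deriv (U v))) :=
            (contDiff_infty_iff_deriv.1 (contDiff_infty_iff_deriv.1 (hU v)).2).2
          exact (hU2.comp (by fun_prop : ContDiff ℝ (⊤ : ℕ∞) fun x : Phase V => x.1 v)).neg.sub
            (ContDiff.sum fun z _ => hsmooth _ z)
        · simp only [κ, hw, if_false]
          split_ifs
          · exact hsmooth _ w
          · exact contDiff_const)) (fun w => by
        by_cases hm : MM Vstar (X0 G γ U Vp) (dp w)
        · exact Or.inr hm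
        · left
          funext x
          have hw : w ≠ v := fun hw => hm (hw ▸ h)
          by_cases hadj : G.Adj v w <;> simp [κ, f, hw, hm, hadj])
    convert (hκ ▸ hq.lieX).add hcorr using 1
    funext x
    ext w <;> simp [polyField]
  obtain ⟨i, hi, hsingle⟩ := hS.exists_single_mem hfS
    ⟨u, by
      have h0 : f u = derivative (derivative (Vp v u)) := if_pos ⟨hvu, hu⟩
      intro hz
      have := hd2 u hvu
      rw [← h0, hz] at this
      simp at this⟩
    (fun i hi => by
      rw [(hfw i hi).2]
      exact hd2 i (hfw i hi).1.1)
    (fun i j hi hj hij δ hδ => hineq v i j (hfw i hi).1.1 (hfw j hj).1.1 hij ⟨δ, fun t => by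
      rw [← (hfw i hi).2, ← (hfw j hj).2, hδ, taylor_eval]⟩)
  apply (hfw i hi).1.2
  convert hsingle.2 using 1
  funext x
  ext w
  · simp [polyField, dp]
  · by_cases hw : w = i
    · subst hw
      simp [polyField, dp]
    · simp [polyField, dp, hw]

end Geometry

/-- Theorem 6.2. Assume `G` is connected, `V*` is nonempty, and for
each vertex `v` the neighbors of `v` are pairwise inequivalent with respect to `v`
(no two distinct neighbors `u, w` of `v` satisfy `V''_{vu}(·) = V''_{vw}(· + δ)`).
Then the network is controllable. -/
theorem network_controllable_of_pairwise_inequivalent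
    {V : Type} [Fintype V] [DecidableEq V] (G : SimpleGraph V) [DecidableRel G.Adj]
    (Vstar : Finset V) (γ : V → ℝ) (U : V → ℝ → ℝ) (Vp : V → V → Polynomial ℝ)
    (hγpos : ∀ v ∈ Vstar, 0 < γ v) (hγ0 : ∀ v ∉ Vstar, γ v = 0)
    (hU : ∀ v, ContDiff ℝ (⊤ : ℕ∞) (U v))
    (hsym : ∀ u v, G.Adj u v → ∀ x : ℝ, (Vp v u).eval x = (Vp u v).eval (-x))
    (hdeg : ∀ u v, G.Adj u v → 3 ≤ (Vp u v).natDegree)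
    (hconn : G.Connected) (hne : Vstar.Nonempty)
    (hineq : ∀ v u w : V, G.Adj v u → G.Adj v w → u ≠ w →
      ¬ PolyEquiv (derivative (derivative (Vp v u))) (derivative (derivative (Vp v w)))) :
    ∀ v : V, Controllable Vstar (X0 G γ U Vp) v := by
  have hdp : ∀ v, MM Vstar (X0 G γ U Vp) (dp v) := by
    obtain ⟨v₀, hv₀⟩ := id hne
    intro v
    obtain ⟨p⟩ := hconn.preconnected v₀ v
    have h₀ : MM Vstar (X0 G γ U Vp) (dp v₀) := MM.basic v₀ hv₀
    clear hv₀
    induction p with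
    | nil => exact h₀
    | cons hadj _ ih =>
      exact ih (MM.dp_of_adj G γ U Vp hU hsym hdeg hne hineq hadj h₀)
  exact fun v => ⟨(hdp v).dq_of_dp G γ U Vp hU, hdp v⟩
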